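/- Let s > 1 be a real number and let h : ℍ → ℂ be a continuous function on the upper half plane that is invariant under the action of SL(2,ℤ) by Möbius transformations. Suppose there is a constant C > 0 such that |h(x+iy)| ≤ C·y^s for every point x+iy in the standard fundamental domain F = { x+iy : |x| ≤ 1/2, x²+y² ≥ 1, y > 0 }. Then for every integer n and every y > 0, the n-th Fourier mode ĥ_n(y) = ∫₀¹ h(x+iy) e^{−2πinx} dx satisfies |ĥ_n(y)| ≤ C·( y^s + c_s·y^{1−s} ), where c_s = √π · Γ(s − 1/2) · ζ(2s − 1) / ( Γ(s) · ζ(2s) ). In particular, ĥ_n(y) = O(y^{1−s}) as y → 0⁺. -/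

import Mathlib

open Real MeasureTheory

/-- Riemann zeta function for real arguments `s > 1`, as a sum. -/
noncomputable def zetaR (s : ℝ) : ℝ := ∑' n : ℕ, 1 / ((n : ℝ) + 1) ^ s

/-!
By invariance, the value of `|h|` at `z` is at most `C · Im(γz)^s` for some `γ`, hence at most
`C · E(z, s)`, where `E(z, s) = ∑ Im(γz)^s` is the nonholomorphic Eisenstein series. Every Fourier
mode of `h` is bounded by the mean of `|h|` over the horocycle `Im z = y`, and the mean of
`E(·, s)` is computed by unfolding: the bottom rows `(c, d)` with fixed `c` split into `φ(c)`
residue classes of `d` mod `c`, each contributing an integral of `(x² + y²)^(-s)` over the whole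
line, and `∑ φ(c) c^(-2s) = ζ(2s - 1) / ζ(2s)`.
-/

open Set
open scoped ENNReal UpperHalfPlane

section Integrals

lemma lintegral_exp_neg_mul_sq {b : ℝ} (hb : 0 < b) :
    ∫⁻ x : ℝ, ENNReal.ofReal (exp (-b * x ^ 2)) = ENNReal.ofReal √(π / b) := by
  rw [← integral_gaussian, ofReal_integral_eq_lintegral_ofReal (integrable_exp_neg_mul_sq hb)]
  exact .of_forall fun x => (exp_pos _).le

lemma lintegral_rpow_mul_exp_neg_mul_Ioi {a r : ℝ} (ha : 0 < a) (hr : 0 < r) :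
    ∫⁻ t in Ioi 0, ENNReal.ofReal (t ^ (a - 1) * exp (-(r * t))) =
      ENNReal.ofReal (Gamma a * r ^ (-a)) := by
  have hint : IntegrableOn (fun t : ℝ => t ^ (a - 1) * exp (-(r * t))) (Ioi 0) := by
    simpa using integrableOn_rpow_mul_exp_neg_mul_rpow (s := a - 1) (p := 1) (by linarith)
      one_pos hr
  rw [rpow_neg hr.le, ← inv_rpow hr.le, ← one_div, mul_comm (Gamma a),
    ← integral_rpow_mul_exp_neg_mul_Ioi ha hr, ofReal_integral_eq_lintegral_ofReal hint]
  filter_upwards [ae_restrict_mem measurableSet_Ioi] with t (ht : 0 < t)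
  simp only [Pi.zero_apply]
  positivity

lemma lintegral_rpow_mul_exp_neg_add_sq_mul (s y : ℝ) {t : ℝ} (ht : 0 < t) :
    ∫⁻ x : ℝ, ENNReal.ofReal (t ^ (s - 1) * exp (-((x ^ 2 + y ^ 2) * t))) =
      ENNReal.ofReal √π * ENNReal.ofReal (t ^ (s - 1 / 2 - 1) * exp (-(y ^ 2 * t))) := by
  have hsplit (x : ℝ) : t ^ (s - 1) * exp (-((x ^ 2 + y ^ 2) * t)) =
      t ^ (s - 1) * exp (-(y ^ 2 * t)) * exp (-t * x ^ 2) := by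
    rw [mul_assoc, ← exp_add]
    ring_nf
  have hpow : t ^ (s - 1) = t ^ (s - 1 / 2 - 1) * √t := by
    rw [sqrt_eq_rpow, ← rpow_add ht]
    ring_nf
  have hsqrt : √t ≠ 0 := (sqrt_pos.2 ht).ne'
  simp_rw [hsplit, ENNReal.ofReal_mul (show 0 ≤ t ^ (s - 1) * exp (-(y ^ 2 * t)) by positivity)]
  rw [lintegral_const_mul' _ _ ENNReal.ofReal_ne_top, lintegral_exp_neg_mul_sq ht,
    ← ENNReal.ofReal_mul (by positivity), ← ENNReal.ofReal_mul (by positivity), hpow,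
    sqrt_div' _ ht.le]
  congr 1
  field_simp

lemma lintegral_sq_add_sq_rpow_neg {s y : ℝ} (hs : 1 / 2 < s) (hy : 0 < y) :
    ∫⁻ x : ℝ, ENNReal.ofReal ((x ^ 2 + y ^ 2) ^ (-s)) =
      ENNReal.ofReal (√π * Gamma (s - 1 / 2) / Gamma s * y ^ (1 - 2 * s)) := by
  have hΓ : 0 < Gamma s := Gamma_pos_of_pos (by linarith)
  have hpow : (y ^ 2) ^ (-(s - 1 / 2)) = y ^ (1 - 2 * s) := by
    rw [← rpow_natCast, ← rpow_mul hy.le]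
    push_cast
    ring_nf
  -- Write `Γ(s) (x² + y²)^(-s)` as an integral over `t` and integrate the Gaussian in `x` first.
  have hmul : ENNReal.ofReal (Gamma s) * ∫⁻ x : ℝ, ENNReal.ofReal ((x ^ 2 + y ^ 2) ^ (-s)) =
      ENNReal.ofReal (√π * (Gamma (s - 1 / 2) * y ^ (1 - 2 * s))) := calc
    _ = ∫⁻ x : ℝ, ∫⁻ t in Ioi 0,
          ENNReal.ofReal (t ^ (s - 1) * exp (-((x ^ 2 + y ^ 2) * t))) := by
      rw [← lintegral_const_mul' _ _ ENNReal.ofReal_ne_top]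
      refine lintegral_congr fun x => ?_
      rw [lintegral_rpow_mul_exp_neg_mul_Ioi (by linarith) (by positivity),
        ENNReal.ofReal_mul hΓ.le]
    _ = ∫⁻ t in Ioi 0, ∫⁻ x : ℝ,
          ENNReal.ofReal (t ^ (s - 1) * exp (-((x ^ 2 + y ^ 2) * t))) :=
      lintegral_lintegral_swap (by unfold Function.uncurry; fun_prop)
    _ = ∫⁻ t in Ioi 0, ENNReal.ofReal √π *
          ENNReal.ofReal (t ^ (s - 1 / 2 - 1) * exp (-(y ^ 2 * t))) :=
      setLIntegral_congr_fun measurableSet_Ioi fun t ht =>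
        lintegral_rpow_mul_exp_neg_add_sq_mul s y ht
    _ = _ := by
      rw [lintegral_const_mul' _ _ ENNReal.ofReal_ne_top,
        lintegral_rpow_mul_exp_neg_mul_Ioi (by linarith) (by positivity),
        ← ENNReal.ofReal_mul (sqrt_nonneg _), hpow]
  rw [← ENNReal.mul_right_inj (by simpa using hΓ) ENNReal.ofReal_ne_top, hmul,
    ← ENNReal.ofReal_mul hΓ.le]
  congr 1
  field_simp

lemma tsum_setLIntegral_Ioc_add_intCast (f : ℝ → ℝ≥0∞) (a : ℝ) :
    ∑' m : ℤ, ∫⁻ x in Ioc 0 1, f (x + m + a) = ∫⁻ x, f x := by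
  rw [← lintegral_add_right_eq_self f a, ← setLIntegral_univ, ← iUnion_Ioc_intCast ℝ,
    lintegral_iUnion (fun _ => measurableSet_Ioc) (pairwise_disjoint_Ioc_intCast ℝ)]
  refine tsum_congr fun m => ?_
  rw [← (measurePreserving_add_right volume (m : ℝ)).setLIntegral_comp_preimage_emb
    (measurableEmbedding_addRight _) (fun x => f (x + a))]
  simp

end Integrals

section DirichletSeries

lemma tsum_mul_tsum_eq_tsum_sum_divisorsAntidiagonal (f g : ℕ → ℝ≥0∞) :
    (∑' a : ℕ+, f a) * ∑' b : ℕ+, g b =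
      ∑' n : ℕ+, ∑ p ∈ (n : ℕ).divisorsAntidiagonal, f p.1 * g p.2 := by
  simp_rw [← ENNReal.tsum_mul_right, ← ENNReal.tsum_mul_left]
  rw [← ENNReal.tsum_prod (f := fun a b : ℕ+ => f a * g b), ← sigmaAntidiagonalEquivProd.tsum_eq,
    ENNReal.tsum_sigma']
  exact tsum_congr fun n =>
    Finset.tsum_subtype (n : ℕ).divisorsAntidiagonal fun p => f p.1 * g p.2

lemma tsum_pnat_rpow_neg {t : ℝ} (ht : 1 < t) :
    ∑' n : ℕ+, ((n : ℕ) : ℝ≥0∞) ^ (-t) = ENNReal.ofReal (zetaR t) := by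
  have hsum : Summable fun n : ℕ => 1 / ((n : ℝ) + 1) ^ t := by
    simpa using (summable_nat_add_iff 1).2 (summable_one_div_nat_rpow.2 ht)
  rw [zetaR, ENNReal.ofReal_tsum_of_nonneg (fun n => by positivity) hsum,
    tsum_pnat_eq_tsum_succ (f := fun n : ℕ => (n : ℝ≥0∞) ^ (-t))]
  refine tsum_congr fun n => ?_
  rw [← ENNReal.ofReal_natCast, ENNReal.ofReal_rpow_of_pos (by positivity),
    rpow_neg (by positivity), one_div]
  push_cast
  rfl

lemma zetaR_nonneg (t : ℝ) : 0 ≤ zetaR t := tsum_nonneg fun _ => by positivity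

lemma zetaR_pos {t : ℝ} (ht : 1 < t) : 0 < zetaR t := by
  rw [← ENNReal.ofReal_pos, ← tsum_pnat_rpow_neg ht]
  exact lt_of_lt_of_le (by simp) (ENNReal.le_tsum (1 : ℕ+))

lemma tsum_rpow_neg_mul_tsum_totient_mul_rpow_neg (t : ℝ) :
    (∑' n : ℕ+, ((n : ℕ) : ℝ≥0∞) ^ (-t)) *
        ∑' n : ℕ+, (Nat.totient n : ℝ≥0∞) * ((n : ℕ) : ℝ≥0∞) ^ (-t) =
      ∑' n : ℕ+, ((n : ℕ) : ℝ≥0∞) ^ (-(t - 1)) := by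
  rw [tsum_mul_tsum_eq_tsum_sum_divisorsAntidiagonal (fun n => (n : ℝ≥0∞) ^ (-t))
    (fun n => (Nat.totient n : ℝ≥0∞) * (n : ℝ≥0∞) ^ (-t))]
  refine tsum_congr fun n => ?_
  have hterm : ∀ p ∈ (n : ℕ).divisorsAntidiagonal,
      (p.1 : ℝ≥0∞) ^ (-t) * ((Nat.totient p.2 : ℝ≥0∞) * (p.2 : ℝ≥0∞) ^ (-t)) =
        (Nat.totient p.2 : ℝ≥0∞) * ((n : ℕ) : ℝ≥0∞) ^ (-t) := by
    intro p hp
    rw [← (Nat.mem_divisorsAntidiagonal.1 hp).1, Nat.cast_mul,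
      ENNReal.mul_rpow_of_ne_top (by simp) (by simp)]
    ring
  rw [Finset.sum_congr rfl hterm, ← Finset.sum_mul,
    Nat.sum_divisorsAntidiagonal' (fun _ d => (Nat.totient d : ℝ≥0∞)), ← Nat.cast_sum,
    Nat.sum_totient, neg_sub, sub_eq_add_neg, ENNReal.rpow_add _ _ (by simp) (by simp),
    ENNReal.rpow_one]

lemma tsum_totient_mul_rpow_neg {t : ℝ} (ht : 2 < t) :
    ∑' n : ℕ+, (Nat.totient n : ℝ≥0∞) * ((n : ℕ) : ℝ≥0∞) ^ (-t) =
      ENNReal.ofReal (zetaR (t - 1) / zetaR t) := by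
  have hζ : 0 < zetaR t := zetaR_pos (by linarith)
  rw [← ENNReal.mul_right_inj (by simpa using hζ) (ENNReal.ofReal_ne_top (r := zetaR t)),
    ← tsum_pnat_rpow_neg (by linarith), tsum_rpow_neg_mul_tsum_totient_mul_rpow_neg,
    tsum_pnat_rpow_neg (by linarith), tsum_pnat_rpow_neg (by linarith),
    ← ENNReal.ofReal_mul hζ.le, mul_div_cancel₀ _ hζ.ne']

end DirichletSeries

section ResidueClasses

lemma tsum_int_eq_sum_range_tsum (f : ℤ → ℝ≥0∞) {c : ℕ} (hc : c ≠ 0) :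
    ∑' d, f d = ∑ r ∈ Finset.range c, ∑' m : ℤ, f (r + c * m) := by
  have : NeZero c := ⟨hc⟩
  rw [← (Int.divModEquiv c).symm.tsum_eq, ENNReal.tsum_prod', ENNReal.tsum_comm, tsum_fintype,
    ← Fin.sum_univ_eq_sum_range (fun r => ∑' m : ℤ, f (r + c * m))]
  simp [Int.divModEquiv_symm_apply, mul_comm, add_comm]

lemma tsum_coprime_eq_totient_mul {f : ℤ → ℝ≥0∞} {c : ℕ} (hc : c ≠ 0) {A : ℝ≥0∞}
    (hf : ∀ r : ℕ, ∑' m : ℤ, f (r + c * m) = A) :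
    ∑' d : ℤ, (if Int.gcd c d = 1 then f d else 0) = Nat.totient c * A := by
  have hclass (r : ℕ) : ∑' m : ℤ, (if Int.gcd c (r + c * m) = 1 then f (r + c * m) else 0) =
      if c.Coprime r then A else 0 := by
    simp only [Int.gcd_add_mul_left_right, Int.gcd_natCast_natCast, ← Nat.coprime_iff_gcd_eq_one]
    split_ifs
    · exact hf r
    · exact tsum_zero
  rw [tsum_int_eq_sum_range_tsum _ hc, Finset.sum_congr rfl fun r _ => hclass r,
    ← Finset.sum_filter, Finset.sum_const, nsmul_eq_mul, Nat.totient_eq_card_coprime]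

end ResidueClasses

section Eisenstein

/-- `Im(γz)^s` for `γ ∈ SL(2,ℤ)` with bottom row `(c, d)`, as an element of `[0, ∞]`. -/
noncomputable def eisensteinTerm (s : ℝ) (c d : ℤ) (z : ℍ) : ℝ≥0∞ :=
  ENNReal.ofReal ((z.im / Complex.normSq (c * z + d)) ^ s)

/-- The nonholomorphic Eisenstein series `∑ Im(γz)^s` over `γ ∈ Γ_∞ \ SL(2,ℤ)`, where `Γ_∞` is
the stabilizer of `∞`, as an element of `[0, ∞]`. Cosets are encoded by their bottom rows, which
are determined up to sign: `(0, 1)` and the coprime pairs `(c, d)` with `c > 0`. -/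
noncomputable def nonholomorphicEisenstein (s : ℝ) (z : ℍ) : ℝ≥0∞ :=
  eisensteinTerm s 0 1 z +
    ∑' c : ℕ+, ∑' d : ℤ, if Int.gcd (c : ℕ) d = 1 then eisensteinTerm s (c : ℕ) d z else 0

/-- The coefficient of `y^(1-s)` in the constant term of the nonholomorphic Eisenstein series. -/
noncomputable def scatteringCoeff (s : ℝ) : ℝ :=
  √π * Gamma (s - 1 / 2) * zetaR (2 * s - 1) / (Gamma s * zetaR (2 * s))

lemma scatteringCoeff_nonneg {s : ℝ} (hs : 1 / 2 ≤ s) : 0 ≤ scatteringCoeff s := by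
  have := Gamma_nonneg_of_nonneg (show 0 ≤ s - 1 / 2 by linarith)
  have := Gamma_nonneg_of_nonneg (show 0 ≤ s by linarith)
  have := zetaR_nonneg (2 * s - 1)
  have := zetaR_nonneg (2 * s)
  unfold scatteringCoeff
  positivity

lemma eisensteinTerm_neg (s : ℝ) (c d : ℤ) (z : ℍ) :
    eisensteinTerm s (-c) (-d) z = eisensteinTerm s c d z := by
  have : ((-c : ℤ) : ℂ) * z + (-d : ℤ) = -(c * z + d) := by push_cast; ring
  rw [eisensteinTerm, this, Complex.normSq_neg, eisensteinTerm]

lemma eisensteinTerm_mk (s : ℝ) (c d : ℤ) (x : ℝ) {y : ℝ} (hy : 0 < y) :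
    eisensteinTerm s c d ⟨⟨x, y⟩, hy⟩ =
      ENNReal.ofReal ((y / ((c * x + d) ^ 2 + (c * y) ^ 2)) ^ s) := by
  simp [eisensteinTerm, Complex.normSq_apply, sq]

lemma measurable_eisensteinTerm_mk (s : ℝ) (c d : ℤ) {y : ℝ} (hy : 0 < y) :
    Measurable fun x : ℝ => eisensteinTerm s c d ⟨⟨x, y⟩, hy⟩ := by
  simp only [eisensteinTerm_mk]
  fun_prop

lemma measurable_ite_coprime_eisensteinTerm_mk (s : ℝ) (c d : ℤ) {y : ℝ} (hy : 0 < y) :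
    Measurable fun x : ℝ =>
      if Int.gcd c d = 1 then eisensteinTerm s c d ⟨⟨x, y⟩, hy⟩ else 0 := by
  split_ifs
  exacts [measurable_eisensteinTerm_mk s c d hy, measurable_const]

lemma measurable_tsum_coprime_eisensteinTerm_mk (s : ℝ) (c : ℤ) {y : ℝ} (hy : 0 < y) :
    Measurable fun x : ℝ =>
      ∑' d : ℤ, if Int.gcd c d = 1 then eisensteinTerm s c d ⟨⟨x, y⟩, hy⟩ else 0 :=
  .tsum fun d => measurable_ite_coprime_eisensteinTerm_mk s c d hy

lemma ofReal_im_smul_rpow (s : ℝ) (γ : Matrix.SpecialLinearGroup (Fin 2) ℤ) (z : ℍ) :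
    ENNReal.ofReal ((γ • z).im ^ s) = eisensteinTerm s (γ 1 0) (γ 1 1) z := by
  rw [ModularGroup.im_smul_eq_div_normSq, ModularGroup.denom_apply, eisensteinTerm]

lemma eisensteinTerm_le_nonholomorphicEisenstein (s : ℝ) {c d : ℤ} (hcd : Int.gcd c d = 1)
    (z : ℍ) : eisensteinTerm s c d z ≤ nonholomorphicEisenstein s z := by
  have of_pos (k : ℕ+) (e : ℤ) (hke : Int.gcd (k : ℕ) e = 1) :
      eisensteinTerm s (k : ℕ) e z ≤ nonholomorphicEisenstein s z := by
    refine le_trans ?_ le_add_self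
    refine le_trans (le_trans ?_ (ENNReal.le_tsum e)) (ENNReal.le_tsum k)
    rw [if_pos hke]
  rcases lt_trichotomy c 0 with hc | rfl | hc
  · obtain ⟨k, rfl⟩ : ∃ k : ℕ, c = -k := ⟨c.natAbs, by omega⟩
    have := of_pos ⟨k, by omega⟩ (-d) (by simpa using hcd)
    rwa [← eisensteinTerm_neg, neg_neg]
  · rw [Int.gcd_zero_left] at hcd
    rcases Int.natAbs_eq_iff.1 hcd with rfl | rfl
    · exact le_self_add
    · rw [← eisensteinTerm_neg]
      exact le_self_add
  · obtain ⟨k, rfl⟩ := Int.eq_ofNat_of_zero_le hc.le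
    exact of_pos ⟨k, by omega⟩ d hcd

lemma ofReal_im_smul_rpow_le_nonholomorphicEisenstein (s : ℝ)
    (γ : Matrix.SpecialLinearGroup (Fin 2) ℤ) (z : ℍ) :
    ENNReal.ofReal ((γ • z).im ^ s) ≤ nonholomorphicEisenstein s z := by
  rw [ofReal_im_smul_rpow]
  exact eisensteinTerm_le_nonholomorphicEisenstein s
    (Int.isCoprime_iff_gcd_eq_one.1 (ModularGroup.bottom_row_coprime γ)) z

lemma eisensteinTerm_add_mul_mk (s : ℝ) {c : ℕ} (hc : c ≠ 0) (r : ℕ) (m : ℤ) (x : ℝ) {y : ℝ}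
    (hy : 0 < y) :
    eisensteinTerm s c (r + c * m) ⟨⟨x, y⟩, hy⟩ =
      (c : ℝ≥0∞) ^ (-(2 * s)) * ENNReal.ofReal (y ^ s) *
        ENNReal.ofReal (((x + m + r / c) ^ 2 + y ^ 2) ^ (-s)) := by
  have hc' : (0 : ℝ) < c := by positivity
  have hden : ((c : ℤ) * x + (r + c * m : ℤ)) ^ 2 + ((c : ℤ) * y) ^ 2 =
      (c : ℝ) ^ (2 : ℝ) * ((x + m + r / c) ^ 2 + y ^ 2) := by
    rw [rpow_two]
    push_cast
    field_simp
    ring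
  rw [eisensteinTerm_mk, hden, div_rpow hy.le (by positivity),
    mul_rpow (by positivity) (by positivity), ← rpow_mul hc'.le, ← ENNReal.ofReal_natCast,
    ENNReal.ofReal_rpow_of_pos hc', ← ENNReal.ofReal_mul (by positivity),
    ← ENNReal.ofReal_mul (by positivity), rpow_neg hc'.le, rpow_neg (by positivity)]
  congr 1
  field_simp

lemma tsum_setLIntegral_eisensteinTerm_add_mul {s y : ℝ} (hs : 1 / 2 < s) (hy : 0 < y) {c : ℕ}
    (hc : c ≠ 0) (r : ℕ) :
    ∑' m : ℤ, ∫⁻ x in Ioc 0 1, eisensteinTerm s c (r + c * m) ⟨⟨x, y⟩, hy⟩ =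
      (c : ℝ≥0∞) ^ (-(2 * s)) *
        ENNReal.ofReal (√π * Gamma (s - 1 / 2) / Gamma s * y ^ (1 - s)) := by
  have htop : (c : ℝ≥0∞) ^ (-(2 * s)) * ENNReal.ofReal (y ^ s) ≠ ∞ :=
    ENNReal.mul_ne_top (by simp [hc]) ENNReal.ofReal_ne_top
  have hpow : y ^ (1 - s) = y ^ s * y ^ (1 - 2 * s) := by
    rw [← rpow_add hy]
    ring_nf
  simp_rw [eisensteinTerm_add_mul_mk s hc, lintegral_const_mul' _ _ htop]
  rw [ENNReal.tsum_mul_left, tsum_setLIntegral_Ioc_add_intCast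
      (fun x => ENNReal.ofReal ((x ^ 2 + y ^ 2) ^ (-s))), lintegral_sq_add_sq_rpow_neg hs hy,
    mul_assoc, ← ENNReal.ofReal_mul (by positivity), hpow]
  ring_nf

lemma setLIntegral_tsum_coprime_eisensteinTerm {s y : ℝ} (hs : 1 / 2 < s) (hy : 0 < y) {c : ℕ}
    (hc : c ≠ 0) :
    ∫⁻ x in Ioc 0 1, ∑' d : ℤ,
        (if Int.gcd c d = 1 then eisensteinTerm s c d ⟨⟨x, y⟩, hy⟩ else 0) =
      Nat.totient c * (c : ℝ≥0∞) ^ (-(2 * s)) *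
        ENNReal.ofReal (√π * Gamma (s - 1 / 2) / Gamma s * y ^ (1 - s)) := by
  rw [lintegral_tsum fun d => (measurable_ite_coprime_eisensteinTerm_mk s c d hy).aemeasurable,
    mul_assoc, ← tsum_coprime_eq_totient_mul
      (f := fun d => ∫⁻ x in Ioc 0 1, eisensteinTerm s c d ⟨⟨x, y⟩, hy⟩) hc
      (tsum_setLIntegral_eisensteinTerm_add_mul hs hy hc)]
  refine tsum_congr fun d => ?_
  split_ifs <;> simp

lemma setLIntegral_nonholomorphicEisenstein {s y : ℝ} (hs : 1 < s) (hy : 0 < y) :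
    ∫⁻ x in Ioc 0 1, nonholomorphicEisenstein s ⟨⟨x, y⟩, hy⟩ =
      ENNReal.ofReal (y ^ s + scatteringCoeff s * y ^ (1 - s)) := by
  have hsc := scatteringCoeff_nonneg (s := s) (by linarith)
  have hζ := div_nonneg (zetaR_nonneg (2 * s - 1)) (zetaR_nonneg (2 * s))
  have hcoprime (c : ℕ+) := setLIntegral_tsum_coprime_eisensteinTerm (s := s) (by linarith) hy
    c.ne_zero
  unfold nonholomorphicEisenstein
  rw [lintegral_add_left (measurable_eisensteinTerm_mk s 0 1 hy), lintegral_tsum fun c : ℕ+ =>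
    (measurable_tsum_coprime_eisensteinTerm_mk s (c : ℕ) hy).aemeasurable]
  simp_rw [hcoprime, eisensteinTerm_mk]
  rw [ENNReal.tsum_mul_right, tsum_totient_mul_rpow_neg (by linarith), ← ENNReal.ofReal_mul hζ,
    ENNReal.ofReal_add (by positivity) (by positivity), scatteringCoeff]
  congr 1
  · simp
  · congr 1
    ring

end Eisenstein

lemma enorm_le_nonholomorphicEisenstein {E : Type*} [SeminormedAddCommGroup E] {s C : ℝ}
    {h : ℍ → E}
    (hinv : ∀ (γ : Matrix.SpecialLinearGroup (Fin 2) ℤ) (z : ℍ), ‖h (γ • z)‖ = ‖h z‖)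
    (hbound : ∀ z : ℍ, |z.re| ≤ 1 / 2 → 1 ≤ z.re ^ 2 + z.im ^ 2 → ‖h z‖ ≤ C * z.im ^ s) (z : ℍ) :
    ‖h z‖ₑ ≤ ENNReal.ofReal C * nonholomorphicEisenstein s z := by
  obtain ⟨γ, hnormSq, hre⟩ := ModularGroup.exists_smul_mem_fd z
  rw [Complex.normSq_apply, ← sq, ← sq] at hnormSq
  calc ‖h z‖ₑ = ENNReal.ofReal ‖h (γ • z)‖ := by rw [hinv, ofReal_norm]
    _ ≤ ENNReal.ofReal (C * (γ • z).im ^ s) :=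
      ENNReal.ofReal_le_ofReal (hbound (γ • z) hre hnormSq)
    _ = ENNReal.ofReal C * ENNReal.ofReal ((γ • z).im ^ s) :=
      ENNReal.ofReal_mul' (rpow_nonneg (γ • z).im_pos.le s)
    _ ≤ _ := by
      gcongr
      exact ofReal_im_smul_rpow_le_nonholomorphicEisenstein s γ z

lemma norm_integral_mul_le_of_norm_le_one {α A : Type*} [MeasurableSpace α] {μ : Measure α}
    [NormedRing A] [NormedSpace ℝ A] {f g : α → A} {B : ℝ} (hB : 0 ≤ B) (hg : ∀ x, ‖g x‖ ≤ 1)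
    (hf : ∫⁻ x, ‖f x‖ₑ ∂μ ≤ ENNReal.ofReal B) : ‖∫ x, f x * g x ∂μ‖ ≤ B := by
  rw [← ENNReal.ofReal_le_ofReal_iff hB, ofReal_norm]
  refine (enorm_integral_le_lintegral_enorm _).trans ((lintegral_mono fun x => ?_).trans hf)
  rw [enorm_le_iff_norm_le]
  exact (norm_mul_le _ _).trans (mul_le_of_le_one_right (norm_nonneg _) (hg x))

/-- The `L¹` norm over a horocycle dominates all Fourier modes at once. -/
theorem fourier_mode_bound_general {E : Type*} [SeminormedAddCommGroup E] {s C : ℝ} (hs : 1 < s)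
    {h : ℍ → E}
    (hinv : ∀ (γ : Matrix.SpecialLinearGroup (Fin 2) ℤ) (z : ℍ), ‖h (γ • z)‖ = ‖h z‖)
    (hbound : ∀ z : ℍ, |z.re| ≤ 1 / 2 → 1 ≤ z.re ^ 2 + z.im ^ 2 → ‖h z‖ ≤ C * z.im ^ s)
    {y : ℝ} (hy : 0 < y) :
    ∫⁻ x in Ioc (0 : ℝ) 1, ‖h ⟨⟨x, y⟩, hy⟩‖ₑ ≤
      ENNReal.ofReal (C * (y ^ s + scatteringCoeff s * y ^ (1 - s))) := by
  have hsc := scatteringCoeff_nonneg (s := s) (by linarith)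
  rw [ENNReal.ofReal_mul' (by positivity), ← setLIntegral_nonholomorphicEisenstein hs hy,
    ← lintegral_const_mul' _ _ ENNReal.ofReal_ne_top]
  exact lintegral_mono fun x => enorm_le_nonholomorphicEisenstein hinv hbound _

/-- bound on Fourier modes of an `SL(2,ℤ)`-invariant function with
moderate growth on the fundamental domain. -/
theorem fourier_mode_bound (s : ℝ) (hs : 1 < s) (h : UpperHalfPlane → ℂ)
    (hcont : Continuous h)
    (hinv : ∀ (γ : Matrix.SpecialLinearGroup (Fin 2) ℤ) (z : UpperHalfPlane),
      h (γ • z) = h z)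
    (C : ℝ) (hC : 0 < C)
    (hbound : ∀ z : UpperHalfPlane, |z.re| ≤ 1 / 2 → 1 ≤ z.re ^ 2 + z.im ^ 2 →
      ‖h z‖ ≤ C * z.im ^ s) :
    ∀ (n : ℤ) (y : ℝ) (hy : 0 < y),
      ‖∫ x in (0:ℝ)..1, h ⟨⟨x, y⟩, hy⟩ * Complex.exp (-2 * π * Complex.I * n * x)‖ ≤
        C * (y ^ s +
          (Real.sqrt π * Real.Gamma (s - 1 / 2) * zetaR (2 * s - 1) /
            (Real.Gamma s * zetaR (2 * s))) * y ^ (1 - s)) := by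
  intro n y hy
  have hcoeff := scatteringCoeff_nonneg (s := s) (by linarith)
  have hnonneg : 0 ≤ C * (y ^ s + scatteringCoeff s * y ^ (1 - s)) := by positivity
  have hexp (x : ℝ) : ‖Complex.exp (-2 * π * Complex.I * n * x)‖ ≤ 1 := by simp [Complex.norm_exp]
  rw [intervalIntegral.integral_of_le zero_le_one]
  exact norm_integral_mul_le_of_norm_le_one hnonneg hexp
    (fourier_mode_bound_general hs (fun γ z => by rw [hinv]) hbound hy)
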